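/- Let a, b, c, d be Gaussian integers (elements of ℤ[i] ⊂ ℂ). If (a, b, c, d) ≠ (0, 0, 0, 0), then (a² + ab − b²) − i·(c² + cd − d²) ≠ 0; since this quantity is a Gaussian integer, its squared modulus satisfies |(a² + ab − b²) − i·(c² + cd − d²)|² ≥ 1. (This is the full-diversity / non-vanishing determinant property of the Golden code: with θ = (1+√5)/2, θ̄ = (1−√5)/2, x₀ = a + bθ, x₁ = c + dθ, σ(x₀) = a + bθ̄, σ(x₁) = c + dθ̄, one has x₀σ(x₀) − i·x₁σ(x₁) = (a² + ab − b²) − i·(c² + cd − d²).) -/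

import Mathlib

noncomputable section

open Complex GaussianInt

/-- The Golden-code determinant quantity associated with Gaussian integers
`a, b, c, d`: with `x₀ = a + bθ`, `x₁ = c + dθ`, one has
`x₀σ(x₀) − i·x₁σ(x₁) = (a² + ab − b²) − i·(c² + cd − d²)`. -/
def goldenQ (a b c d : GaussianInt) : ℂ :=
  (toComplex a ^ 2 + toComplex a * toComplex b - toComplex b ^ 2)
    - Complex.I * (toComplex c ^ 2 + toComplex c * toComplex d - toComplex d ^ 2)

/-- Reduction of Gaussian integers modulo `2 - i`, sending `i` to `2`. -/
def goldenR : GaussianInt →+* ZMod 5 :=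
  Zsqrtd.lift ⟨2, by decide⟩

/-- The imaginary unit. -/
def goldenI : GaussianInt := ⟨0, 1⟩

theorem goldenI_sq : goldenI * goldenI = -1 := by
  simp [goldenI, Zsqrtd.ext_iff]

theorem goldenR_I : goldenR goldenI = 2 := by
  simp [goldenR, goldenI]

theorem goldenR_dvd (a : GaussianInt) (h : goldenR a = 0) :
    ∃ u, a = (2 - goldenI) * u := by
  have h1 : ((a.re + 2 * a.im : ℤ) : ZMod 5) = 0 := by
    have : goldenR a = (a.re : ZMod 5) + a.im * 2 := rfl
    rw [this] at h
    push_cast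
    rw [← h]; ring
  rw [ZMod.intCast_zmod_eq_zero_iff_dvd] at h1
  obtain ⟨k, hk⟩ := h1
  push_cast at hk
  refine ⟨⟨2 * k - a.im, k⟩, ?_⟩
  rw [Zsqrtd.ext_iff]
  constructor
  · simp [goldenI]; linarith
  · simp [goldenI]

set_option maxRecDepth 100000 in
set_option maxHeartbeats 1000000 in
theorem golden_mod1 : ∀ a b c d : ZMod 5,
    a ^ 2 + a * b - b ^ 2 - 2 * (c ^ 2 + c * d - d ^ 2) = 0 → a - 2 * b = 0 ∧ c - 2 * d = 0 := by
  decide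

theorem golden_mod2 : ∀ b d : ZMod 5,
    4 * b ^ 2 - 2 * (4 * d ^ 2) = 0 → b = 0 ∧ d = 0 := by
  decide

theorem golden_pi_ne : (2 - goldenI) ≠ 0 := by
  simp [goldenI, Zsqrtd.ext_iff]

theorem golden_descent (n : ℕ) : ∀ a b c d : GaussianInt,
    a.norm + b.norm + c.norm + d.norm ≤ n →
    a ^ 2 + a * b - b ^ 2 - goldenI * (c ^ 2 + c * d - d ^ 2) = 0 →
    a = 0 ∧ b = 0 ∧ c = 0 ∧ d = 0 := by
  induction n with
  | zero =>
    intro a b c d hn _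
    have ha := GaussianInt.norm_nonneg a
    have hb := GaussianInt.norm_nonneg b
    have hc := GaussianInt.norm_nonneg c
    have hd := GaussianInt.norm_nonneg d
    push_cast at hn
    refine ⟨?_, ?_, ?_, ?_⟩ <;> rw [← GaussianInt.norm_eq_zero] <;> linarith
  | succ n ih =>
    intro a b c d hn h
    have hI := goldenI_sq
    have h1 := congrArg goldenR h
    simp only [map_sub, map_add, map_mul, map_pow, map_zero, goldenR_I] at h1
    obtain ⟨hab, hcd⟩ := golden_mod1 _ _ _ _ h1
    obtain ⟨u, hu⟩ := goldenR_dvd (a - 2 * b) (by rw [map_sub, map_mul, map_ofNat]; exact hab)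
    obtain ⟨v, hv⟩ := goldenR_dvd (c - 2 * d) (by rw [map_sub, map_mul, map_ofNat]; exact hcd)
    have ha : a = 2 * b + (2 - goldenI) * u := by rw [← hu]; ring
    have hc : c = 2 * d + (2 - goldenI) * v := by rw [← hv]; ring
    have h2 : (2 + goldenI) * b ^ 2 + 5 * b * u + (2 - goldenI) * u ^ 2
        - goldenI * ((2 + goldenI) * d ^ 2 + 5 * d * v + (2 - goldenI) * v ^ 2) = 0 := by
      apply (mul_eq_zero.mp _).resolve_left golden_pi_ne
      rw [← h, ha, hc]
      linear_combination (-(b ^ 2) + goldenI * d ^ 2) * hI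
    have h3 := congrArg goldenR h2
    have h5 : (5 : ZMod 5) = 0 := rfl
    simp only [map_sub, map_add, map_mul, map_pow, map_zero, goldenR_I, map_ofNat, h5] at h3
    obtain ⟨hb0, hd0⟩ := golden_mod2 (goldenR b) (goldenR d) (by rw [← h3]; ring)
    obtain ⟨b', hb'⟩ := goldenR_dvd b hb0
    obtain ⟨d', hd'⟩ := goldenR_dvd d hd0
    obtain ⟨a', ha'⟩ : ∃ a', a = (2 - goldenI) * a' := ⟨2 * b' + u, by rw [ha, hb']; ring⟩
    obtain ⟨c', hc'⟩ : ∃ c', c = (2 - goldenI) * c' := ⟨2 * d' + v, by rw [hc, hd']; ring⟩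
    clear ha hc hu hv h2 h3 h1 hab hcd hb0 hd0
    subst ha' hb' hc' hd'
    have hN : Zsqrtd.norm (2 - goldenI) = 5 := by
      simp [goldenI, Zsqrtd.norm_def]
    simp only [Zsqrtd.norm_mul, hN] at hn
    have ha := GaussianInt.norm_nonneg a'
    have hb := GaussianInt.norm_nonneg b'
    have hc := GaussianInt.norm_nonneg c'
    have hd := GaussianInt.norm_nonneg d'
    push_cast at hn
    obtain ⟨e1, e2, e3, e4⟩ := ih a' b' c' d' (by omega) (by
      apply (mul_eq_zero.mp _).resolve_left (pow_ne_zero 2 golden_pi_ne)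
      rw [← h]; ring)
    simp [e1, e2, e3, e4]

/-- Full diversity / non-vanishing determinant of the Golden code: for Gaussian
integers `a, b, c, d`, not all zero, the quantity
`(a² + ab − b²) − i·(c² + cd − d²)` is a nonzero Gaussian integer; in particular
its squared modulus is at least `1`. -/
theorem stmt4 (a b c d : GaussianInt) (h : ¬(a = 0 ∧ b = 0 ∧ c = 0 ∧ d = 0)) :
    (∃ g : GaussianInt, goldenQ a b c d = toComplex g) ∧
    goldenQ a b c d ≠ 0 ∧
    1 ≤ Complex.normSq (goldenQ a b c d) := by
  have hq : goldenQ a b c d =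
      toComplex (a ^ 2 + a * b - b ^ 2 - goldenI * (c ^ 2 + c * d - d ^ 2)) := by
    have : toComplex goldenI = Complex.I := by simp [goldenI, GaussianInt.toComplex_def]
    simp [goldenQ, this]
  have hne : a ^ 2 + a * b - b ^ 2 - goldenI * (c ^ 2 + c * d - d ^ 2) ≠ 0 := fun h0 =>
    h (golden_descent (a.norm + b.norm + c.norm + d.norm).toNat a b c d (Int.self_le_toNat _) h0)
  refine ⟨⟨_, hq⟩, ?_, ?_⟩
  · rw [hq]
    simpa only [ne_eq, GaussianInt.toComplex_eq_zero] using hne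
  · rw [hq, ← GaussianInt.intCast_real_norm]
    have := GaussianInt.norm_pos.mpr hne
    exact_mod_cast this
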